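/- Let F = GaloisField 2 8 and f : F → F the Gold APN function f(x) = x³. Then for every affine map A : F → F, the Hamming distance satisfies |{x ∈ F : f(x) ≠ A(x)}| ≥ 240; equivalently dA(f) ≥ 240 = 2⁸ − 16. In particular dA(f) > 2⁸ − 2⁴ − 1, so the Liu–Mesnager–Chen conjectured upper bound dA(f) ≤ 2ⁿ − 2^(n/2) − 1 fails for n = 8. -/

import Mathlib

/-- The distance of `f : V → W` to the set of affine maps:
the minimum Hamming distance `|{x | f x ≠ A x}|` over affine maps `A x = L x + c`. -/
noncomputable def dA {V W : Type*} [AddCommGroup V] [AddCommGroup W]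
    [Module (ZMod 2) V] [Module (ZMod 2) W] (f : V → W) : ℕ :=
  sInf { d : ℕ | ∃ (L : V →ₗ[ZMod 2] W) (c : W), d = {x | f x ≠ L x + c}.ncard }

/-! Suppose that `x ^ 3` agrees with an affine map on a set `S` of `17` points of a field with `256`
elements. As `x ^ 3 + y ^ 3 + z ^ 3 + (x + y + z) ^ 3 = (x + y) (x + z) (y + z)`, the set `S` is a
Sidon set and no sum of three of its points lies in `S`. There are `680` such triples and at most
`239` possible sums, so some `w` is the sum of three triples, and after translating `S` by `w` these
triples are pairwise disjoint projective lines. Multiplication by a scalar and the Frobenius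
automorphism reduce the constant term of the affine map to `1` or to a fixed noncube.

The three lines span a subspace of order `64`. It contains at most `9` points, and each of its three
other cosets at most `3`, so two of these cosets are full. A full coset contains a point that
differs from each of the other two by one vector of each line, and these two vectors of the first
line may be taken to be its basis. A finite computation over all triples of lines with either
constant term shows that two such points never lie in cosets whose sum contains two points. -/

namespace GoldCube

section Sidon

variable {A : Type*} [AddCommGroup A]

/-- Sidon sets: a sum of two distinct elements of `T` determines the two summands. Only used in
elementary abelian `2`-groups, where `x + x = 0` forces the restriction to distinct summands. -/
def IsSidon (T : Set A) : Prop :=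
  ∀ ⦃x⦄, x ∈ T → ∀ ⦃y⦄, y ∈ T → ∀ ⦃z⦄, z ∈ T → ∀ ⦃w⦄, w ∈ T →
    x ≠ y → x + y = z + w → x = z ∨ x = w

/-- The abstract plane `𝔽₂²`, whose three nonzero vectors index the points of a line. -/
abbrev Plane : Type := ZMod 2 × ZMod 2

variable [Module (ZMod 2) A]

/-- Three pairwise disjoint projective lines contained in a Sidon set `T` that omits `0`, each
parametrized by the nonzero vectors of a plane. -/
structure IsLineTriple (T : Set A) (ℓ : Fin 3 → Plane →ₗ[ZMod 2] A) : Prop where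
  isSidon : IsSidon T
  zero_notMem : 0 ∉ T
  mem : ∀ i b, b ≠ 0 → ℓ i b ∈ T
  disjoint : ∀ i j b c, i ≠ j → b ≠ 0 → c ≠ 0 → ℓ i b ≠ ℓ j c

/-- The union of the three lines `ℓ i`. -/
def linePoints (ℓ : Fin 3 → Plane →ₗ[ZMod 2] A) : Set A :=
  {x | ∃ i b, b ≠ 0 ∧ ℓ i b = x}

/-- The linear map sending a triple of plane vectors to the sum of their images. -/
def lineSum (ℓ : Fin 3 → Plane →ₗ[ZMod 2] A) : (Fin 3 → Plane) →ₗ[ZMod 2] A :=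
  LinearMap.lsum (ZMod 2) (fun _ => Plane) (ZMod 2) ℓ

theorem lineSum_apply (ℓ : Fin 3 → Plane →ₗ[ZMod 2] A) (v : Fin 3 → Plane) :
    lineSum ℓ v = ℓ 0 (v 0) + ℓ 1 (v 1) + ℓ 2 (v 2) := by
  simp [lineSum, LinearMap.lsum_apply, Fin.sum_univ_three]

theorem add_add_eq_of_char_two (x y : A) : x + (x + y) = y := by
  rw [← add_assoc, ZModModule.add_self, zero_add]

/-- A point of `T` on a secant through a line of `T` lies on that line, because the line writes
the direction of the secant as a sum of two points of `T`. -/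
theorem IsSidon.exists_eq_of_add_eq {T : Set A} (hT : IsSidon T) {ℓ : Plane →ₗ[ZMod 2] A}
    (hℓ : ∀ b, b ≠ 0 → ℓ b ∈ T) {x y : A} (hx : x ∈ T) (hy : y ∈ T) (hxy : x ≠ y) {b : Plane}
    (h : x + y = ℓ b) : ∃ c, c ≠ 0 ∧ ℓ c = x := by
  have hb : b ≠ 0 := by
    rintro rfl
    exact hxy (sub_eq_zero.mp (by rw [ZModModule.sub_eq_add, h, map_zero]))
  have hsplit : ∀ b : Plane, b ≠ 0 → ∃ c, c ≠ 0 ∧ b + c ≠ 0 ∧ c + (b + c) = b := by decide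
  obtain ⟨c, hc, hbc, hsum⟩ := hsplit b hb
  rcases hT hx hy (hℓ c hc) (hℓ _ hbc) hxy (by rw [h, ← map_add, hsum]) with hxc | hxc
  exacts [⟨c, hc, hxc.symm⟩, ⟨_, hbc, hxc.symm⟩]

namespace IsLineTriple

variable {T : Set A} {ℓ : Fin 3 → Plane →ₗ[ZMod 2] A}

theorem mem_linePoints_of_add_eq (h : IsLineTriple T ℓ) {x y : A} (hx : x ∈ T) (hy : y ∈ T)
    (hxy : x ≠ y) {i j : Fin 3} {b c : Plane} (hsum : x + y = ℓ i b + ℓ j c) :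
    x ∈ linePoints ℓ := by
  rcases eq_or_ne b 0 with rfl | hb
  · rw [map_zero, zero_add] at hsum
    exact ⟨j, h.isSidon.exists_eq_of_add_eq (h.mem j) hx hy hxy hsum⟩
  rcases eq_or_ne c 0 with rfl | hc
  · rw [map_zero, add_zero] at hsum
    exact ⟨i, h.isSidon.exists_eq_of_add_eq (h.mem i) hx hy hxy hsum⟩
  rcases h.isSidon hx hy (h.mem i b hb) (h.mem j c hc) hxy hsum with rfl | rfl
  exacts [⟨i, b, hb, rfl⟩, ⟨j, c, hc, rfl⟩]

theorem ne_add (h : IsLineTriple T ℓ) {i j k : Fin 3} (hij : i ≠ j) (hik : i ≠ k) {b : Plane}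
    (hb : b ≠ 0) (c d : Plane) : ℓ i b ≠ ℓ j c + ℓ k d := by
  intro hsum
  have hne_zero : ℓ i b ≠ 0 := fun h0 => h.zero_notMem (h0 ▸ h.mem i b hb)
  rcases eq_or_ne c 0 with rfl | hc <;> rcases eq_or_ne d 0 with rfl | hd
  · simp [hne_zero] at hsum
  · exact h.disjoint i k b d hik hb hd (by simpa using hsum)
  · exact h.disjoint i j b c hij hb hc (by simpa using hsum)
  · have hcd : ℓ j c ≠ ℓ k d := fun hcd => hne_zero (by rw [hsum, hcd, ZModModule.add_self])
    obtain ⟨a, ha, hac⟩ := h.isSidon.exists_eq_of_add_eq (h.mem i) (h.mem j c hc) (h.mem k d hd)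
      hcd hsum.symm
    exact h.disjoint i j a c hij ha hc hac

theorem lineSum_injective (h : IsLineTriple T ℓ) : Function.Injective (lineSum ℓ) := by
  refine (injective_iff_map_eq_zero _).mpr fun v hv => ?_
  rw [lineSum_apply] at hv
  have hzero (i j k : Fin 3) (hij : i ≠ j) (hik : i ≠ k)
      (hsum : ℓ i (v i) + (ℓ j (v j) + ℓ k (v k)) = 0) : v i = 0 := by
    by_contra hvi
    exact h.ne_add hij hik hvi (v j) (v k)
      (sub_eq_zero.mp ((ZModModule.sub_eq_add _ _).trans hsum))
  have h0 := hzero 0 1 2 (by decide) (by decide) (by rw [← hv]; abel)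
  have h1 := hzero 1 0 2 (by decide) (by decide) (by rw [← hv]; abel)
  have h2 := hzero 2 0 1 (by decide) (by decide) (by rw [← hv]; abel)
  ext i : 1
  fin_cases i
  exacts [h0, h1, h2]

theorem mem_linePoints (h : IsLineTriple T ℓ) {x : A} (hx : x ∈ T)
    (hG : x ∈ (lineSum ℓ).range) : x ∈ linePoints ℓ := by
  obtain ⟨v, rfl⟩ := hG
  by_contra hnot
  have hne (i b) (hb : b ≠ 0) : lineSum ℓ v ≠ ℓ i b := fun heq => hnot ⟨i, b, hb, heq.symm⟩
  rcases eq_or_ne (v 0) 0 with h0 | h0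
  · rcases eq_or_ne (v 1) 0 with h1 | h1
    · refine hne 2 (v 2) (fun h2 => h.zero_notMem ?_) (by simp [lineSum_apply, h0, h1])
      simpa [lineSum_apply, h0, h1, h2] using hx
    · refine hnot (h.mem_linePoints_of_add_eq (i := 2) (j := 2) (b := v 2) (c := 0) hx
        (h.mem 1 _ h1) (hne 1 _ h1) ?_)
      rw [lineSum_apply, h0, map_zero, map_zero, zero_add, add_zero, add_comm,
        add_add_eq_of_char_two]
  · refine hnot (h.mem_linePoints_of_add_eq (i := 1) (j := 2) (b := v 1) (c := v 2) hx
      (h.mem 0 _ h0) (hne 0 _ h0) ?_)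
    rw [lineSum_apply, add_comm, add_assoc, add_add_eq_of_char_two]

theorem apply_ne_zero (h : IsLineTriple T ℓ) {x y : A} (hx : x ∈ T) (hy : y ∈ T) (hxy : x ≠ y)
    (hxℓ : x ∉ linePoints ℓ) {v : Fin 3 → Plane} (hv : x + y = lineSum ℓ v) (i : Fin 3) :
    v i ≠ 0 := by
  intro hvi
  rw [lineSum_apply] at hv
  have hmem (j k : Fin 3) (hsum : x + y = ℓ i (v i) + (ℓ j (v j) + ℓ k (v k))) :
      x ∈ linePoints ℓ :=
    h.mem_linePoints_of_add_eq hx hy hxy (by rwa [hvi, map_zero, zero_add] at hsum)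
  refine hxℓ ?_
  obtain rfl | rfl | rfl : i = 0 ∨ i = 1 ∨ i = 2 := by lia
  · exact hmem 1 2 (by rw [hv]; abel)
  · exact hmem 0 2 (by rw [hv]; abel)
  · exact hmem 0 1 (by rw [hv]; abel)

end IsLineTriple

/-- The standard basis of `Plane`. -/
def planeBasis : Finset Plane := {(1, 0), (0, 1)}

/-- `x` and some point `y` of `T` differ by a sum of one point of each line, that on `ℓ 0` being
`ℓ 0 b`. -/
def IsAdjacent (T : Set A) (ℓ : Fin 3 → Plane →ₗ[ZMod 2] A) (b : Plane) (x : A) : Prop :=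
  ∃ y ∈ T, ∃ v, v 0 = b ∧ (∀ i, v i ≠ 0) ∧ x + y = lineSum ℓ v

open scoped Classical in
theorem card_linePoints_le (ℓ : Fin 3 → Plane →ₗ[ZMod 2] A) (T : Finset A) :
    (T.filter (· ∈ linePoints ℓ)).card ≤ 9 := by
  let indices : Finset (Fin 3 × Plane) := {ib | ib.2 ≠ 0}
  calc (T.filter (· ∈ linePoints ℓ)).card
      ≤ (indices.image fun ib => ℓ ib.1 ib.2).card := by
        refine Finset.card_le_card fun x hx => ?_
        obtain ⟨i, b, hb, rfl⟩ := (Finset.mem_filter.mp hx).2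
        exact Finset.mem_image.mpr ⟨(i, b), by simpa [indices] using hb, rfl⟩
    _ ≤ indices.card := Finset.card_image_le
    _ = 9 := by decide

theorem isAdjacent_of_subset_pair {T : Set A} {ℓ : Fin 3 → Plane →ₗ[ZMod 2] A} {x y z : A}
    {v w : Fin 3 → Plane} (hy : y ∈ T) (hz : z ∈ T) (hv : ∀ i, v i ≠ 0) (hw : ∀ i, w i ≠ 0)
    (hxy : x + y = lineSum ℓ v) (hxz : x + z = lineSum ℓ w) (hvw : planeBasis ⊆ {v 0, w 0}) :
    ∀ e ∈ planeBasis, IsAdjacent T ℓ e x := by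
  intro e he
  rcases Finset.mem_insert.mp (hvw he) with h | h
  · exact ⟨y, hy, v, h.symm, hv, hxy⟩
  · exact ⟨z, hz, w, (Finset.mem_singleton.mp h).symm, hw, hxz⟩

theorem exists_pair_of_card_eq_four {Q : Type*} [AddCommGroup Q] [Module (ZMod 2) Q] [Fintype Q]
    (hQ : Fintype.card Q = 4) {f : Q → ℕ} (hzero : f 0 ≤ 9) (hne : ∀ a, a ≠ 0 → f a ≤ 3)
    (hsum : 17 ≤ ∑ a, f a) :
    ∃ a b, a ≠ 0 ∧ b ≠ 0 ∧ a ≠ b ∧ f a = 3 ∧ f b = 3 ∧ 2 ≤ f (a + b) := by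
  classical
  obtain ⟨a, b, c, hab, hac, hbc, habc⟩ := Finset.card_eq_three.mp
    (show (Finset.univ.erase (0 : Q)).card = 3 by simp [hQ])
  have hmem (x : Q) : x ≠ 0 ↔ x = a ∨ x = b ∨ x = c := by
    simpa using congrArg (x ∈ ·) habc
  have ha := (hmem a).mpr (by simp)
  have hb := (hmem b).mpr (by simp)
  have hc := (hmem c).mpr (by simp)
  have hcab : a + b = c := by
    have hne_zero : a + b ≠ 0 := fun h => hab (sub_eq_zero.mp ((ZModModule.sub_eq_add a b).trans h))
    simpa [ha, hb] using (hmem (a + b)).mp hne_zero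
  have hacb : a + c = b := by rw [← hcab, add_add_eq_of_char_two]
  have hbca : b + c = a := by rw [← hcab, add_comm a, add_add_eq_of_char_two]
  rw [← Finset.add_sum_erase _ _ (Finset.mem_univ 0), habc, Finset.sum_insert (by simp [hab, hac]),
    Finset.sum_pair hbc] at hsum
  have hfa := hne a ha
  have hfb := hne b hb
  have hfc := hne c hc
  by_cases h3a : f a = 3
  · by_cases h3b : f b = 3
    · exact ⟨a, b, ha, hb, hab, h3a, h3b, by rw [hcab]; lia⟩
    · exact ⟨a, c, ha, hc, hac, h3a, by lia, by rw [hacb]; lia⟩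
  · exact ⟨b, c, hb, hc, hbc, by lia, by lia, by rw [hbca]; lia⟩

theorem planeBasis_subset_pair : ∀ v w : Plane, v ≠ 0 → w ≠ 0 → v + w ≠ 0 →
    planeBasis ⊆ {v, w} ∨
      planeBasis ⊆ {v, v + w} ∨
      planeBasis ⊆ {w, v + w} := by
  decide

namespace IsLineTriple

section Coset

variable {T : Set A} {ℓ : Fin 3 → Plane →ₗ[ZMod 2] A}

theorem exists_lineSum_eq (h : IsLineTriple T ℓ) {x y : A} (hx : x ∈ T) (hy : y ∈ T)
    (hxy : x ≠ y) {q : A ⧸ (lineSum ℓ).range} (hq : q ≠ 0) (hxq : (lineSum ℓ).range.mkQ x = q)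
    (hyq : (lineSum ℓ).range.mkQ y = q) :
    ∃ v, (∀ i, v i ≠ 0) ∧ x + y = lineSum ℓ v := by
  obtain ⟨v, hv⟩ : x + y ∈ (lineSum ℓ).range := by
    rw [← ZModModule.sub_eq_add, ← Submodule.Quotient.eq]
    exact hxq.trans hyq.symm
  refine ⟨v, h.apply_ne_zero hx hy hxy (fun ⟨i, b, _, hb⟩ => hq ?_) hv.symm, hv.symm⟩
  rw [← hxq, Submodule.mkQ_apply, Submodule.Quotient.mk_eq_zero, ← hb]
  exact ⟨Pi.single i b, LinearMap.lsum_piSingle ..⟩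

theorem exists_pair_lineSum_eq (h : IsLineTriple T ℓ) {q : A ⧸ (lineSum ℓ).range} (hq : q ≠ 0)
    {x y z : A} (hx : x ∈ T ∧ (lineSum ℓ).range.mkQ x = q)
    (hy : y ∈ T ∧ (lineSum ℓ).range.mkQ y = q) (hz : z ∈ T ∧ (lineSum ℓ).range.mkQ z = q)
    (hxy : x ≠ y) (hxz : x ≠ z) (hyz : y ≠ z) :
    ∃ v w, x + y = lineSum ℓ v ∧ x + z = lineSum ℓ w ∧
      ∀ i, v i ≠ 0 ∧ w i ≠ 0 ∧ v i + w i ≠ 0 := by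
  obtain ⟨v, hv, hxyv⟩ := h.exists_lineSum_eq hx.1 hy.1 hxy hq hx.2 hy.2
  obtain ⟨w, hw, hxzw⟩ := h.exists_lineSum_eq hx.1 hz.1 hxz hq hx.2 hz.2
  obtain ⟨u, hu, hyzu⟩ := h.exists_lineSum_eq hy.1 hz.1 hyz hq hy.2 hz.2
  have huvw : u = v + w := h.lineSum_injective <| by
    rw [map_add, ← hxyv, ← hxzw, ← hyzu, add_comm x y, add_assoc, add_add_eq_of_char_two]
  exact ⟨v, w, hxyv, hxzw, fun i => ⟨hv i, hw i, by simpa [huvw] using hu i⟩⟩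

end Coset

variable {T : Finset A} {ℓ : Fin 3 → Plane →ₗ[ZMod 2] A}

open scoped Classical in
theorem card_coset_le (h : IsLineTriple (T : Set A) ℓ) {q : A ⧸ (lineSum ℓ).range} (hq : q ≠ 0) :
    (T.filter ((lineSum ℓ).range.mkQ · = q)).card ≤ 3 := by
  by_contra! hcard
  obtain ⟨a, b, c, d, ha, hb, hc, hd, hab, hac, had, hbc, hbd, hcd⟩ :=
    Finset.three_lt_card_iff.mp hcard
  rw [Finset.mem_filter] at ha hb hc hd
  obtain ⟨v, w, hv, hw, hvw⟩ := h.exists_pair_lineSum_eq hq ha hb hc hab hac hbc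
  obtain ⟨v', u, hv', hu, hvu⟩ := h.exists_pair_lineSum_eq hq ha hb hd hab had hbd
  obtain ⟨w', u', hw', hu', hwu⟩ := h.exists_pair_lineSum_eq hq ha hc hd hac had hcd
  obtain rfl : v = v' := h.lineSum_injective (hv.symm.trans hv')
  obtain rfl : w = w' := h.lineSum_injective (hw.symm.trans hw')
  obtain rfl : u = u' := h.lineSum_injective (hu.symm.trans hu')
  have hplane : ∀ v w u : Plane, v ≠ 0 → w ≠ 0 → u ≠ 0 → v + w ≠ 0 → v + u ≠ 0 → w + u ≠ 0 →
      v = w + u := by decide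
  have hvwu : v = w + u := funext fun i =>
    hplane _ _ _ (hvw i).1 (hvw i).2.1 (hvu i).2.1 (hvw i).2.2 (hvu i).2.2 (hwu i).2.2
  have hsum : a + b = c + d := by
    rw [hv, hvwu, map_add, ← hw, ← hu, add_comm a c, add_assoc, add_add_eq_of_char_two]
  exact (h.isSidon ha.1 hb.1 hc.1 hd.1 hab hsum).elim hac had

open scoped Classical in
theorem exists_isAdjacent (h : IsLineTriple (T : Set A) ℓ) {q : A ⧸ (lineSum ℓ).range}
    (hq : q ≠ 0) (hcard : 2 < (T.filter ((lineSum ℓ).range.mkQ · = q)).card) :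
    ∃ x ∈ T, (lineSum ℓ).range.mkQ x = q ∧
      ∀ e ∈ planeBasis, IsAdjacent (T : Set A) ℓ e x := by
  obtain ⟨a, b, c, ha, hb, hc, hab, hac, hbc⟩ := Finset.two_lt_card_iff.mp hcard
  rw [Finset.mem_filter] at ha hb hc
  obtain ⟨v, w, hv, hw, hvw⟩ := h.exists_pair_lineSum_eq hq ha hb hc hab hac hbc
  have hbc_sum : b + c = lineSum ℓ (v + w) := by
    rw [map_add, ← hv, ← hw, add_comm a b, add_assoc, add_add_eq_of_char_two]
  have hv_ne (i) : v i ≠ 0 := (hvw i).1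
  have hw_ne (i) : w i ≠ 0 := (hvw i).2.1
  have hvw_ne (i) : (v + w) i ≠ 0 := (hvw i).2.2
  rcases planeBasis_subset_pair _ _ (hv_ne 0) (hw_ne 0) (hvw_ne 0) with he | he | he
  · exact ⟨a, ha.1, ha.2, isAdjacent_of_subset_pair hb.1 hc.1 hv_ne hw_ne hv hw he⟩
  · exact ⟨b, hb.1, hb.2, isAdjacent_of_subset_pair ha.1 hc.1 hv_ne hvw_ne
      ((add_comm b a).trans hv) hbc_sum he⟩
  · exact ⟨c, hc.1, hc.2, isAdjacent_of_subset_pair ha.1 hb.1 hw_ne hvw_ne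
      ((add_comm c a).trans hw) ((add_comm c b).trans hbc_sum) he⟩

theorem card_quotient_eq_four (h : IsLineTriple (T : Set A) ℓ) (hA : Nat.card A = 256) :
    Nat.card (A ⧸ (lineSum ℓ).range) = 4 := by
  have hrange : Nat.card (lineSum ℓ).range = 64 := by
    rw [← Nat.card_congr (LinearEquiv.ofInjective _ h.lineSum_injective).toEquiv]
    simp [Nat.card_eq_fintype_card]
  have hmul := (lineSum ℓ).range.card_eq_card_quotient_mul_card
  lia

open scoped Classical in
/-- The `17` points are spread over the four cosets of the span of the three lines: at most `9` in
the span and at most `3` in each other coset, so two of these cosets are full and the third one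
has at least two points. -/
theorem exists_isAdjacent_pair (h : IsLineTriple (T : Set A) ℓ) (hA : Nat.card A = 256)
    (hT : 17 ≤ T.card) :
    ∃ x ∈ T, ∃ y ∈ T, x ≠ y ∧
      (∀ e ∈ planeBasis,
        IsAdjacent (T : Set A) ℓ e x ∧ IsAdjacent (T : Set A) ℓ e y) ∧
      2 ≤ (T.filter fun z => x + y + z ∈ (lineSum ℓ).range).card := by
  have : Finite (A ⧸ (lineSum ℓ).range) := Nat.finite_of_card_ne_zero <| by
    rw [h.card_quotient_eq_four hA]
    decide
  have : Fintype (A ⧸ (lineSum ℓ).range) := Fintype.ofFinite _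
  have hzero : (T.filter ((lineSum ℓ).range.mkQ · = 0)).card ≤ 9 := by
    refine (Finset.card_le_card fun x hx => ?_).trans (card_linePoints_le ℓ T)
    obtain ⟨hxT, hx0⟩ := Finset.mem_filter.mp hx
    exact Finset.mem_filter.mpr
      ⟨hxT, h.mem_linePoints hxT ((Submodule.Quotient.mk_eq_zero _).mp hx0)⟩
  obtain ⟨p, q, hp, hq, hpq, hp3, hq3, hpq2⟩ := exists_pair_of_card_eq_four
    (Nat.card_eq_fintype_card.symm.trans (h.card_quotient_eq_four hA)) hzero
    (fun q hq => h.card_coset_le hq)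
    (hT.trans_eq (Finset.card_eq_sum_card_fiberwise fun _ _ => Finset.mem_univ _))
  obtain ⟨x, hx, hxp, hxadj⟩ := h.exists_isAdjacent hp hp3.ge
  obtain ⟨y, hy, hyq, hyadj⟩ := h.exists_isAdjacent hq hq3.ge
  refine ⟨x, hx, y, hy, fun hxy => hpq (by rw [← hxp, ← hyq, hxy]),
    fun e he => ⟨hxadj e he, hyadj e he⟩, hpq2.trans (Finset.card_le_card fun z hz => ?_)⟩
  obtain ⟨hzT, hz⟩ := Finset.mem_filter.mp hz
  refine Finset.mem_filter.mpr ⟨hzT, (Submodule.Quotient.mk_eq_zero _).mp ?_⟩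
  rw [← Submodule.mkQ_apply, map_add, map_add, hxp, hyq, hz, ZModModule.add_self]

end IsLineTriple

end Sidon

section Configuration

variable {F : Type*} [Field F]

/-- On `T` the cube map coincides with an affine map with constant term `D`. -/
def AgreesWithCube (T : Set F) (D : F) : Prop :=
  ∃ L : F →+ F, ∀ t ∈ T, t ^ 3 = L t + D

theorem AgreesWithCube.zero_notMem {T : Set F} {D : F} (h : AgreesWithCube T D) (hD : D ≠ 0) :
    0 ∉ T := by
  obtain ⟨L, hL⟩ := h
  intro h0
  simpa [hD.symm] using hL 0 h0

/-- The symmetric biadditive map attached to the cube map, which is a quadratic map in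
characteristic `2`. -/
def cubePolar (x y : F) : F := x ^ 2 * y + x * y ^ 2

section CharTwo

variable [CharP F 2]

theorem cubePolar_eq (x y : F) : cubePolar x y = (x + y) ^ 3 + x ^ 3 + y ^ 3 := by
  rw [cubePolar]
  linear_combination (norm := (ring_nf; reduce_mod_char!))

theorem cubePolar_add_left (x y z : F) :
    cubePolar (x + y) z = cubePolar x z + cubePolar y z := by
  simp only [cubePolar]
  linear_combination (norm := (ring_nf; reduce_mod_char!))

namespace AgreesWithCube

variable {T : Set F} {D : F}

theorem cubePolar_eq (h : AgreesWithCube T D) {x y : F} (hx : x ∈ T) (hy : y ∈ T)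
    (hxy : x + y ∈ T) : cubePolar x y = D := by
  obtain ⟨L, hL⟩ := h
  rw [GoldCube.cubePolar_eq, hL x hx, hL y hy, hL _ hxy, map_add]
  linear_combination (norm := (ring_nf; reduce_mod_char!))

theorem sum_cubePolar_eq (h : AgreesWithCube T D) {x a b c : F} (hx : x ∈ T) (ha : a ∈ T)
    (hb : b ∈ T) (hc : c ∈ T) (hsum : x + a + b + c ∈ T) :
    cubePolar a x + cubePolar b x + cubePolar c x +
      (D + cubePolar a b + cubePolar (a + b) c) = 0 := by
  obtain ⟨L, hL⟩ := h
  have hy := hL _ hsum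
  simp only [map_add] at hy
  simp only [cubePolar]
  linear_combination (norm := (ring_nf; reduce_mod_char!))
    hy + hL x hx + hL a ha + hL b hb + hL c hc

theorem isSidon (h : AgreesWithCube T D) : IsSidon T := by
  obtain ⟨L, hL⟩ := h
  intro x hx y hy z hz w hw hxy hsum
  obtain rfl : w = x + y + z := by
    rw [hsum, add_right_comm, CharTwo.add_self_eq_zero, zero_add]
  have hprod : (x + y) * (x + z) * (y + z) = 0 := by
    have hcube := hL _ hw
    simp only [map_add] at hcube
    linear_combination (norm := (ring_nf; reduce_mod_char!)) hcube + hL x hx + hL y hy + hL z hz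
  simp only [mul_eq_zero, CharTwo.add_eq_zero] at hprod
  rcases hprod with (hprod | rfl) | rfl
  · exact absurd hprod hxy
  · exact Or.inl rfl
  · exact Or.inr (by rw [add_assoc, CharTwo.add_self_eq_zero, add_zero])

end AgreesWithCube

end CharTwo

/-- The three-element subsets of `T` with sum `w`; for `w = 0` these are the projective lines
contained in `T`. -/
def triplesWithSum [DecidableEq F] (T : Finset F) (w : F) : Finset (Finset F) :=
  {t ∈ T.powersetCard 3 | ∑ x ∈ t, x = w}

theorem mem_triplesWithSum [DecidableEq F] {T t : Finset F} {w : F} :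
    t ∈ triplesWithSum T w ↔ t ⊆ T ∧ t.card = 3 ∧ ∑ x ∈ t, x = w := by
  rw [triplesWithSum, Finset.mem_filter, Finset.mem_powersetCard, and_assoc]

theorem card_triplesWithSum_le_image [DecidableEq F] {φ : F → F} (hφ : Function.Injective φ)
    {u v : F} (hsum : ∀ t : Finset F, t.card = 3 → ∑ x ∈ t, x = u → ∑ x ∈ t, φ x = v)
    (T : Finset F) : (triplesWithSum T u).card ≤ (triplesWithSum (T.image φ) v).card := by
  refine Finset.card_le_card_of_injOn (Finset.image φ) (fun t ht => ?_)
    (Finset.image_injective hφ).injOn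
  obtain ⟨htT, h3, ht⟩ := mem_triplesWithSum.mp ht
  refine mem_triplesWithSum.mpr ⟨Finset.image_subset_image htT, ?_, ?_⟩
  · rw [Finset.card_image_of_injective _ hφ, h3]
  · rw [Finset.sum_image hφ.injOn, hsum t h3 ht]

/-- What a coincidence of the cube map with an affine map in `17` points leads to, up to a
translation: `17` points of agreement, three of whose triples have sum zero. -/
structure IsConfig [DecidableEq F] (T : Finset F) (D : F) : Prop where
  agrees : AgreesWithCube (T : Set F) D
  card : 17 ≤ T.card
  lines : 3 ≤ (triplesWithSum T 0).card

theorem IsConfig.image [DecidableEq F] {T : Finset F} {D : F} (h : IsConfig T D) {φ ψ : F ≃+ F}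
    (hφψ : ∀ x, φ x ^ 3 = ψ (x ^ 3)) : IsConfig (T.image φ) (ψ D) := by
  refine ⟨?_, ?_, h.lines.trans (card_triplesWithSum_le_image φ.injective (fun t _ ht => ?_) T)⟩
  · obtain ⟨L, hL⟩ := h.agrees
    refine ⟨(ψ : F →+ F).comp (L.comp (φ.symm : F →+ F)), fun y hy => ?_⟩
    obtain ⟨t, ht, rfl⟩ := Finset.mem_image.mp hy
    simp [hφψ, hL t ht]
  · rw [Finset.card_image_of_injective _ φ.injective]
    exact h.card
  · rw [← map_sum, ht, map_zero]

theorem IsConfig.exists_scale [DecidableEq F] {T : Finset F} {u r : F} (hr : r ≠ 0)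
    (h : IsConfig T (u * r ^ 3)) : ∃ T' : Finset F, IsConfig T' u := by
  have himage := h.image (φ := (AddAut.mulRight (Units.mk0 r hr)⁻¹ : F ≃+ F))
    (ψ := (AddAut.mulRight (Units.mk0 r hr ^ 3)⁻¹ : F ≃+ F)) fun x => by
      simp [mul_pow]
  exact ⟨_, by simpa [hr] using himage⟩

section CharTwo

variable [CharP F 2]

theorem AgreesWithCube.translate {T : Set F} {D : F} (h : AgreesWithCube T D) (w : F) :
    ∃ D', AgreesWithCube ((· + w) '' T) D' := by
  obtain ⟨L, hL⟩ := h
  refine ⟨D + L w + w ^ 3, L + (AddMonoidHom.mulLeft w).comp (frobenius F 2 : F →+ F) +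
    AddMonoidHom.mulLeft (w ^ 2), ?_⟩
  rintro _ ⟨x, hx, rfl⟩
  simp only [AddMonoidHom.add_apply, AddMonoidHom.comp_apply, AddMonoidHom.coe_mulLeft,
    AddMonoidHom.coe_coe, frobenius_def, map_add]
  linear_combination (norm := (ring_nf; reduce_mod_char!)) hL x hx

theorem IsConfig.const_ne_zero [DecidableEq F] {T : Finset F} {D : F} (h : IsConfig T D) :
    D ≠ 0 := by
  obtain ⟨t, ht⟩ := Finset.card_pos.mp (Nat.lt_of_lt_of_le (by decide) h.lines)
  obtain ⟨htT, h3, hsum⟩ := mem_triplesWithSum.mp ht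
  obtain ⟨x, y, z, hxy, hxz, hyz, rfl⟩ := Finset.card_eq_three.mp h3
  rw [Finset.sum_insert (by simp [hxy, hxz]), Finset.sum_pair hyz, ← add_assoc,
    CharTwo.add_eq_zero] at hsum
  subst hsum
  rw [← h.agrees.cubePolar_eq (x := x) (y := y) (htT (by simp)) (htT (by simp)) (htT (by simp)),
    show cubePolar x y = x * y * (x + y) by rw [cubePolar]; ring]
  simp only [ne_eq, mul_eq_zero, CharTwo.add_eq_zero, not_or]
  refine ⟨⟨?_, ?_⟩, hxy⟩
  · rintro rfl
    exact hyz (zero_add y).symm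
  · rintro rfl
    exact hxz (add_zero x).symm

theorem exists_isConfig [DecidableEq F] (hF : Nat.card F = 256) {S : Finset F} {D : F}
    (hS : AgreesWithCube (S : Set F) D) (hcard : 17 ≤ S.card) :
    ∃ (T : Finset F) (D' : F), IsConfig T D' := by
  have : Finite F := Nat.finite_of_card_ne_zero (by rw [hF]; decide)
  have : Fintype F := Fintype.ofFinite F
  have hmaps : ∀ t ∈ S.powersetCard 3, ∑ x ∈ t, x ∈ Sᶜ := by
    intro t ht
    obtain ⟨hts, h3⟩ := Finset.mem_powersetCard.mp ht
    obtain ⟨x, y, z, hxy, hxz, hyz, rfl⟩ := Finset.card_eq_three.mp h3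
    rw [Finset.sum_insert (by simp [hxy, hxz]), Finset.sum_pair hyz, Finset.mem_compl]
    intro hw
    rcases hS.isSidon (hts (by simp)) (hts (by simp)) (hts (by simp)) hw hxy
      (show x + y = z + (x + (y + z)) by
        linear_combination (norm := (ring_nf; reduce_mod_char!))) with h | h
    · exact hxz h
    · exact hyz (CharTwo.add_eq_zero.mp (left_eq_add.mp h))
  have hchoose : 680 ≤ S.card.choose 3 :=
    (by decide : 680 ≤ Nat.choose 17 3).trans (Nat.choose_le_choose 3 hcard)
  obtain ⟨w, _, hfiber⟩ := Finset.exists_lt_card_fiber_of_mul_lt_card_of_maps_to (n := 2) hmaps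
    (by rw [Finset.card_compl, Finset.card_powersetCard, ← Nat.card_eq_fintype_card, hF]; lia)
  have hinj : Function.Injective (· + w) := add_left_injective w
  obtain ⟨D', hD'⟩ := hS.translate w
  refine ⟨S.image (· + w), D', by rwa [Finset.coe_image], ?_,
    (Nat.succ_le_of_lt hfiber).trans (card_triplesWithSum_le_image hinj (fun t h3 ht => ?_) S)⟩
  · rwa [Finset.card_image_of_injective _ hinj]
  · rw [Finset.sum_add_distrib, ht, Finset.sum_const, h3]
    linear_combination (norm := (ring_nf; reduce_mod_char!))

end CharTwo

theorem exists_eq_cube_of_pow_eq_one {u : F} (hu : u ≠ 0) (h : u ^ 85 = 1) :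
    ∃ r, r ≠ 0 ∧ u = r ^ 3 :=
  ⟨u ^ 57, pow_ne_zero _ hu, by
    rw [← pow_mul, show 57 * 3 = 85 * 2 + 1 by norm_num, pow_succ, pow_mul, h, one_pow, one_mul]⟩

/-- The cubes have index `3` in the cyclic group `Fˣ`, and squaring exchanges the two nontrivial
cosets. -/
theorem exists_cube_or_mul_cube (hF : Nat.card F = 256) {g u : F} (hg : g ≠ 0)
    (hg85 : g ^ 85 ≠ 1) (hu : u ≠ 0) :
    ∃ r, r ≠ 0 ∧ (u = r ^ 3 ∨ u = g * r ^ 3 ∨ u ^ 2 = g * r ^ 3) := by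
  have : Finite F := Nat.finite_of_card_ne_zero (by rw [hF]; decide)
  have : Fintype F := Fintype.ofFinite F
  have hpow {a : F} (ha : a ≠ 0) : (a ^ 85) ^ 3 = 1 := by
    have hcard := FiniteField.pow_card_sub_one_eq_one a ha
    rwa [← Nat.card_eq_fintype_card, hF, show 256 - 1 = 85 * 3 by norm_num, pow_mul] at hcard
  have hprim : IsPrimitiveRoot (g ^ 85) 3 :=
    IsPrimitiveRoot.iff_orderOf.mpr (orderOf_eq_prime (hpow hg) hg85)
  obtain ⟨i, hi, hroot⟩ := hprim.eq_pow_of_pow_eq_one (hpow hu)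
  have hdiv {a : F} (ha : a ≠ 0) (h : a ^ 85 = g ^ 85) : ∃ r, r ≠ 0 ∧ a = g * r ^ 3 := by
    obtain ⟨r, hr, hag⟩ := exists_eq_cube_of_pow_eq_one (div_ne_zero ha hg)
      (by rw [div_pow, h, div_self (pow_ne_zero 85 hg)])
    exact ⟨r, hr, by rw [← hag, mul_div_cancel₀ a hg]⟩
  interval_cases i
  · obtain ⟨r, hr, hur⟩ := exists_eq_cube_of_pow_eq_one hu (by rw [← hroot, pow_zero])
    exact ⟨r, hr, Or.inl hur⟩
  · obtain ⟨r, hr, hur⟩ := hdiv hu (by rw [← hroot, pow_one])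
    exact ⟨r, hr, Or.inr (Or.inl hur)⟩
  · have hsq : (u ^ 2) ^ 85 = g ^ 85 := by
      rw [← pow_mul, mul_comm, pow_mul, ← hroot, ← pow_mul, show 2 * 2 = 3 + 1 by norm_num,
        pow_succ, hpow hg, one_mul]
    obtain ⟨r, hr, hur⟩ := hdiv (pow_ne_zero 2 hu) hsq
    exact ⟨r, hr, Or.inr (Or.inr hur)⟩

theorem IsConfig.exists_normalized [CharP F 2] [DecidableEq F] (hF : Nat.card F = 256) {g : F}
    (hg : g ≠ 0) (hg85 : g ^ 85 ≠ 1) {T : Finset F} {D : F} (h : IsConfig T D) :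
    ∃ T' : Finset F, IsConfig T' 1 ∨ IsConfig T' g := by
  obtain ⟨r, hr, hD | hD | hD⟩ := exists_cube_or_mul_cube hF hg hg85 h.const_ne_zero
  · obtain ⟨T', hT'⟩ := IsConfig.exists_scale (u := 1) hr (by rwa [one_mul, ← hD])
    exact ⟨T', Or.inl hT'⟩
  · obtain ⟨T', hT'⟩ := IsConfig.exists_scale hr (hD ▸ h)
    exact ⟨T', Or.inr hT'⟩
  · have : Finite F := Nat.finite_of_card_ne_zero (by rw [hF]; decide)
    have hfrob : IsConfig _ (D ^ 2) := h.image (φ := (frobeniusEquiv F 2 : F ≃+ F))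
      (ψ := (frobeniusEquiv F 2 : F ≃+ F)) fun x => (map_pow (frobeniusEquiv F 2) x 3).symm
    obtain ⟨T', hT'⟩ := IsConfig.exists_scale hr (hD ▸ hfrob)
    exact ⟨T', Or.inr hT'⟩

theorem exists_strictMono_comp {α β : Type*} [LinearOrder β] {s : Finset α} {n : ℕ}
    (hs : s.card = n) {f : α → β} (hf : Set.InjOn f s) :
    ∃ a : Fin n → α, StrictMono (f ∘ a) ∧ Set.range a = s := by
  have hcard : (s.image f).card = n := (Finset.card_image_of_injOn hf).trans hs
  have hmem (i : Fin n) : ∃ x ∈ s, f x = (s.image f).orderEmbOfFin hcard i :=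
    Finset.mem_image.mp (Finset.orderEmbOfFin_mem _ hcard i)
  choose a ha hfa using hmem
  refine ⟨a, (funext hfa : f ∘ a = _) ▸ OrderEmbedding.strictMono _, ?_⟩
  refine Set.Subset.antisymm (Set.range_subset_iff.mpr ha) fun x hx => ?_
  obtain ⟨i, hi⟩ : f x ∈ Set.range ((s.image f).orderEmbOfFin hcard) := by
    rw [Finset.range_orderEmbOfFin]
    exact Finset.mem_coe.mpr (Finset.mem_image_of_mem f hx)
  exact ⟨i, hf (ha i) hx ((hfa i).trans hi)⟩

section Lines

variable [Module (ZMod 2) F]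

/-- The parametrization of the line through `p` and `q` by the nonzero vectors of a plane. -/
def line (p q : F) : Plane →ₗ[ZMod 2] F :=
  (LinearMap.toSpanSingleton (ZMod 2) F p).coprod (LinearMap.toSpanSingleton (ZMod 2) F q)

theorem line_mem [DecidableEq F] (p q : F) {b : Plane} (hb : b ≠ 0) :
    line p q b ∈ ({p, q, p + q} : Finset F) := by
  have hcases : ∀ b : Plane, b = 0 ∨ b = (1, 0) ∨ b = (0, 1) ∨ b = (1, 1) := by decide
  rcases (hcases b).resolve_left hb with rfl | rfl | rfl <;> simp [line]

end Lines

section SortedLines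

variable [CharP F 2] {e : F → ℕ}

theorem exists_sorted_basis [DecidableEq F] (he : Function.Injective e) {T t : Finset F}
    (ht : t ∈ triplesWithSum T 0) :
    ∃ p q, e p < e q ∧ e q < e (p + q) ∧ t = {p, q, p + q} := by
  obtain ⟨_, h3, hsum⟩ := mem_triplesWithSum.mp ht
  obtain ⟨a, hmono, hrange⟩ := exists_strictMono_comp h3 he.injOn
  have ha : Function.Injective a := hmono.injective.of_comp
  obtain rfl : t = {a 0, a 1, a 2} := by
    rw [← Finset.coe_inj, ← hrange]
    ext
    simp [Fin.exists_fin_succ, eq_comm]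
  have hadd : a 0 + a 1 = a 2 := by
    rw [Finset.sum_insert (by simp [ha.eq_iff]), Finset.sum_pair (ha.ne (by decide)),
      ← add_assoc] at hsum
    exact CharTwo.add_eq_zero.mp hsum
  refine ⟨a 0, a 1, hmono (by decide), ?_, by rw [hadd]⟩
  rw [hadd]
  exact hmono (by decide)

theorem exists_eq_insert_of_mem [DecidableEq F] {T t : Finset F} (ht : t ∈ triplesWithSum T 0)
    {x : F} (hx : x ∈ t) : ∃ y, y ≠ x + y ∧ t = {x, y, x + y} := by
  obtain ⟨_, h3, hsum⟩ := mem_triplesWithSum.mp ht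
  obtain ⟨y, z, hyz, hyz_eq⟩ := Finset.card_eq_two.mp
    (show (t.erase x).card = 2 by rw [Finset.card_erase_of_mem hx, h3])
  rw [← Finset.add_sum_erase _ _ hx, hyz_eq, Finset.sum_pair hyz, ← add_assoc] at hsum
  obtain rfl : x + y = z := CharTwo.add_eq_zero.mp hsum
  exact ⟨y, hyz, by rw [← Finset.insert_erase hx, hyz_eq]⟩

theorem IsSidon.eq_of_mem_triplesWithSum [DecidableEq F] {T : Finset F}
    (hT : IsSidon (T : Set F)) {t u : Finset F} (ht : t ∈ triplesWithSum T 0)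
    (hu : u ∈ triplesWithSum T 0) {x : F} (hxt : x ∈ t) (hxu : x ∈ u) : t = u := by
  have htT := (mem_triplesWithSum.mp ht).1
  have huT := (mem_triplesWithSum.mp hu).1
  obtain ⟨y, hy, rfl⟩ := exists_eq_insert_of_mem ht hxt
  obtain ⟨w, _, rfl⟩ := exists_eq_insert_of_mem hu hxu
  rcases hT (htT (by simp : y ∈ _)) (htT (by simp : x + y ∈ _)) (huT (by simp : w ∈ _))
    (huT (by simp : x + w ∈ _)) hy
    (by linear_combination (norm := (ring_nf; reduce_mod_char!))) with rfl | rfl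
  · rfl
  · rw [← add_assoc, CharTwo.add_self_eq_zero, zero_add, Finset.pair_comm]

variable [Module (ZMod 2) F]

theorem IsConfig.exists_lines [DecidableEq F] {T : Finset F} {D : F} (h : IsConfig T D)
    (he : Function.Injective e) :
    ∃ p q : Fin 3 → F, (∀ i, e (p i) < e (q i) ∧ e (q i) < e (p i + q i)) ∧
      StrictMono (e ∘ p) ∧ IsLineTriple (T : Set F) fun i => line (p i) (q i) := by
  have hsidon := h.agrees.isSidon
  have hbasis (t : Finset F) (ht : t ∈ triplesWithSum T 0) := exists_sorted_basis he ht
  choose! p q hpq hqr htriple using hbasis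
  obtain ⟨s, hs, hs3⟩ := Finset.exists_subset_card_eq h.lines
  have hline {t : Finset F} (ht : t ∈ triplesWithSum T 0) {b : Plane} (hb : b ≠ 0) :
      line (p t) (q t) b ∈ t :=
    (congrArg (line (p t) (q t) b ∈ ·) (htriple t ht)).mpr (line_mem _ _ hb)
  have hp {t : Finset F} (ht : t ∈ triplesWithSum T 0) : p t ∈ t := by
    simpa [line] using hline ht (b := (1, 0)) (by decide)
  have hinj : Set.InjOn (e ∘ p) s := fun t ht u hu htu =>
    hsidon.eq_of_mem_triplesWithSum (hs ht) (hs hu) (hp (hs ht))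
      (he htu ▸ hp (hs hu))
  obtain ⟨t, hmono, hrange⟩ := exists_strictMono_comp hs3 hinj
  have ht (i) : t i ∈ triplesWithSum T 0 := hs (by
    rw [← Finset.mem_coe, ← hrange]
    exact Set.mem_range_self i)
  refine ⟨p ∘ t, q ∘ t, fun i => ⟨hpq _ (ht i), hqr _ (ht i)⟩, hmono, hsidon, ?_, ?_, ?_⟩
  · exact h.agrees.zero_notMem h.const_ne_zero
  · exact fun i b hb => (mem_triplesWithSum.mp (ht i)).1 (hline (ht i) hb)
  · intro i j b c hij hb hc hbc
    refine hij (hmono.injective.of_comp (hsidon.eq_of_mem_triplesWithSum (ht i) (ht j)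
      (hline (ht i) hb) ?_))
    exact (congrArg (· ∈ t j) hbc).mpr (hline (ht j) hc)

end SortedLines

end Configuration

section Code

/-- Multiplication by `X` on the elements of `𝔽₂[X] / (X⁸ + X⁴ + X³ + X² + 1)`, each written as the
number whose bits are its coefficients. -/
def mulTwo (a : ℕ) : ℕ :=
  cond (Nat.testBit a 7) (Nat.xor (2 * a) 285) (2 * a)

/-- Multiplication of the elements of `𝔽₂[X] / (X⁸ + X⁴ + X³ + X² + 1)` coded by numbers, by
Horner's rule. -/
def mul (a b : ℕ) : ℕ :=
  Nat.rec 0 (fun i r => Nat.xor (mulTwo r) (cond (Nat.testBit b (7 - i)) a 0)) 8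

/-- The `k`-th power, for the multiplication `mul`. -/
def npow (a k : ℕ) : ℕ :=
  Nat.rec 1 (fun _ r => mul a r) k

theorem npow_255 : ∀ n < 256, n ≠ 0 → npow (npow (npow n 3) 5) 17 = 1 := by
  decide +kernel

theorem npow_two_85 : npow (npow 2 5) 17 < 256 ∧ npow (npow 2 5) 17 ≠ 1 := by
  decide +kernel

theorem mul_mul_self_lt : ∀ n < 256, mul n (mul n n) < 256 := by
  decide +kernel

variable {K : Type*} [CommRing K]

/-- The element of `K` with coordinates the bits of `n` in the powers `1, g, …, g ^ 7`. -/
def decode (g : K) (n : ℕ) : K :=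
  ∑ i ∈ Finset.range 8, if n.testBit i then g ^ i else 0

theorem decode_zero (g : K) : decode g 0 = 0 := by
  simp [decode]

theorem decode_one (g : K) : decode g 1 = 1 := by
  simp [decode, Finset.sum_range_succ, Nat.testBit_eq_decide_div_mod_eq]

theorem decode_two (g : K) : decode g 2 = g := by
  simp [decode, Finset.sum_range_succ, Nat.testBit_eq_decide_div_mod_eq]

theorem decode_two_mul (g : K) (n : ℕ) :
    decode g (2 * n) + (if n.testBit 7 then g ^ 8 else 0) = g * decode g n := by
  have hbit (i : ℕ) : (2 * n).testBit (i + 1) = n.testBit i := by simp [Nat.testBit_succ]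
  rw [decode, decode, Finset.sum_range_succ', Finset.mul_sum, Finset.sum_range_succ _ 7]
  simp only [hbit, pow_succ', mul_ite, mul_zero]
  simp

/-- `g` is a root of the primitive polynomial `X ^ 8 + X ^ 4 + X ^ 3 + X ^ 2 + 1`. -/
def IsOcticRoot (g : K) : Prop :=
  g ^ 8 = g ^ 4 + g ^ 3 + g ^ 2 + 1

variable [CharP K 2]

theorem decode_xor (g : K) (a b : ℕ) : decode g (a ^^^ b) = decode g a + decode g b := by
  rw [decode, decode, decode, ← Finset.sum_add_distrib]
  refine Finset.sum_congr rfl fun i _ => ?_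
  rw [Nat.testBit_xor]
  cases a.testBit i <;> cases b.testBit i <;> simp [CharTwo.add_self_eq_zero]

namespace IsOcticRoot

variable {g : K}

theorem decode_mulTwo (hg : IsOcticRoot g) (a : ℕ) : decode g (mulTwo a) = g * decode g a := by
  have h285 : decode g 285 = g ^ 8 := by
    rw [hg]
    simp [decode, Finset.sum_range_succ, Nat.testBit_eq_decide_div_mod_eq]
    ring
  rw [← decode_two_mul, mulTwo]
  cases a.testBit 7
  · simp
  · simp only [cond_true, if_true]
    exact (decode_xor g _ _).trans (by rw [h285])

theorem decode_mul (hg : IsOcticRoot g) (a b : ℕ) :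
    decode g (mul a b) = decode g a * decode g b := by
  let partialMul (k : ℕ) : ℕ :=
    Nat.rec 0 (fun i r => Nat.xor (mulTwo r) (cond (Nat.testBit b (7 - i)) a 0)) k
  have hzero : decode g (partialMul 0) = 0 := decode_zero g
  have hsucc (k : ℕ) : decode g (partialMul (k + 1)) =
      g * decode g (partialMul k) + decode g a * (if b.testBit (7 - k) then 1 else 0) := by
    refine (decode_xor g _ _).trans ?_
    rw [hg.decode_mulTwo]
    exact congrArg _ (by cases b.testBit (7 - k) <;> simp [decode_zero])
  have hb : decode g b = ∑ i ∈ Finset.range 8, (if b.testBit i then 1 else 0) * g ^ i := by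
    simp only [decode, ite_mul, one_mul, zero_mul]
  change decode g (partialMul 8) = _
  simp only [hsucc, hzero, hb, Finset.sum_range_succ, Finset.sum_range_zero]
  simp only [Nat.reduceSub]
  ring

theorem decode_npow (hg : IsOcticRoot g) (a k : ℕ) : decode g (npow a k) = decode g a ^ k := by
  induction k with
  | zero => exact (decode_one g).trans (pow_zero _).symm
  | succ k ih => exact (hg.decode_mul a (npow a k)).trans (by rw [ih, pow_succ'])

theorem decode_pow_255 (hg : IsOcticRoot g) {n : ℕ} (hn : n < 256) (hn0 : n ≠ 0) :
    decode g n ^ 255 = 1 := by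
  rw [show 255 = 3 * 5 * 17 by norm_num, pow_mul, pow_mul, ← hg.decode_npow, ← hg.decode_npow,
    ← hg.decode_npow, npow_255 n hn hn0, decode_one]

theorem pow_255 (hg : IsOcticRoot g) : g ^ 255 = 1 := by
  simpa only [decode_two] using hg.decode_pow_255 (n := 2) (by norm_num) two_ne_zero

theorem ne_zero [Nontrivial K] (hg : IsOcticRoot g) : g ≠ 0 := by
  rintro rfl
  exact zero_ne_one ((zero_pow (by norm_num)).symm.trans hg.pow_255)

theorem decode_injOn [Nontrivial K] (hg : IsOcticRoot g) : Set.InjOn (decode g) {n | n < 256} := by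
  intro a ha b hb hab
  by_contra hne
  have hone := hg.decode_pow_255 (n := a ^^^ b) (Nat.xor_lt_two_pow (n := 8) ha hb)
    (Nat.xor_ne_zero_iff.mpr hne)
  rw [decode_xor, hab, CharTwo.add_self_eq_zero, zero_pow (by norm_num)] at hone
  exact zero_ne_one hone

theorem pow_85_ne_one [Nontrivial K] (hg : IsOcticRoot g) : g ^ 85 ≠ 1 := by
  intro h
  refine npow_two_85.2 (hg.decode_injOn npow_two_85.1 (by norm_num : 1 < 256) ?_)
  rw [hg.decode_npow, hg.decode_npow, ← pow_mul, decode_two, decode_one, h]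

end IsOcticRoot

end Code

section Coding

variable {F : Type*} [Field F] [CharP F 2]

theorem exists_isOcticRoot (hF : Nat.card F = 256) : ∃ g : F, IsOcticRoot g := by
  have : Finite F := Nat.finite_of_card_ne_zero (by omega)
  have : Fintype F := Fintype.ofFinite F
  have hcard : Fintype.card F = 256 := by rw [← Nat.card_eq_fintype_card, hF]
  let K := AlgebraicClosure F
  have : CharP K 2 := charP_of_injective_algebraMap (algebraMap F K).injective 2
  obtain ⟨r, hr⟩ := IsAlgClosed.exists_root
    (Polynomial.X ^ 8 - (Polynomial.X ^ 4 + Polynomial.X ^ 3 + Polynomial.X ^ 2 + 1) :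
      Polynomial K) (by
      rw [show Polynomial.degree _ = ((8 : ℕ) : WithBot ℕ) by compute_degree!]
      norm_num)
  have hroot : IsOcticRoot r := by simpa [IsOcticRoot, sub_eq_zero] using hr
  obtain ⟨g, hg⟩ := (Polynomial.splits_X_pow_nat_card_sub_X (K := F)).mem_range_of_isRoot
    (FiniteField.X_pow_card_sub_X_ne_zero F (by rw [hF]; norm_num))
    (i := algebraMap F K) (x := r) (by simp [hcard, pow_succ _ 255, hroot.pow_255])
  refine ⟨g, (algebraMap F K).injective ?_⟩
  simpa [IsOcticRoot, ← hg] using hroot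

/-- A numbering of the field by `0, …, 255` in which addition is bitwise, cubes are computed by
`mul`, and the number `1` stands for the unit. -/
structure IsCubeCoding (e : F → ℕ) : Prop where
  lt : ∀ x, e x < 256
  injective : Function.Injective e
  exists_eq : ∀ n < 256, ∃ x, e x = n
  map_add : ∀ x y, e (x + y) = e x ^^^ e y
  map_cube : ∀ x, e (x ^ 3) = mul (e x) (mul (e x) (e x))
  map_one : e 1 = 1

theorem IsOcticRoot.exists_isCubeCoding (hF : Nat.card F = 256) {g : F} (hg : IsOcticRoot g) :
    ∃ e : F → ℕ, IsCubeCoding e ∧ e g = 2 := by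
  have hbij : Function.Bijective fun n : Fin 256 => decode g n := by
    have : Finite F := Nat.finite_of_card_ne_zero (by omega)
    refine (Nat.bijective_iff_injective_and_card _).mpr
      ⟨fun m n h => Fin.ext (hg.decode_injOn m.2 n.2 h), ?_⟩
    rw [Nat.card_fin, hF]
  let E := Equiv.ofBijective _ hbij
  let e (x : F) : ℕ := E.symm x
  have hlt (x : F) : e x < 256 := (E.symm x).isLt
  have hdecode (x : F) : decode g (e x) = x := E.apply_symm_apply x
  have he {n : ℕ} (hn : n < 256) (x : F) (h : decode g n = x) : e x = n :=
    hg.decode_injOn (hlt x) hn ((hdecode x).trans h.symm)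
  refine ⟨e, ⟨hlt, fun x y h => ?_, fun n hn => ⟨decode g n, he hn _ rfl⟩, fun x y => ?_,
    fun x => ?_, he (by norm_num) 1 (decode_one g)⟩, he (by norm_num) g (decode_two g)⟩
  · rw [← hdecode x, h, hdecode]
  · exact he (Nat.xor_lt_two_pow (n := 8) (hlt x) (hlt y)) _ (by rw [decode_xor, hdecode, hdecode])
  · refine he (mul_mul_self_lt _ (hlt x)) _ ?_
    rw [hg.decode_mul, hg.decode_mul, hdecode]
    ring

end Coding

section Search

/-! Raw `Nat.xor`, `Nat.rec`, … spare the kernel the unfolding of type class instances and of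
recursive definitions. Packing a table into a single number lets one operation treat all `256` field
elements at once. -/

/-- The `n`-th nine-bit block of `t`. -/
def lane (t n : ℕ) : ℕ :=
  Nat.land (Nat.shiftRight t (Nat.mul 9 n)) 511

/-- The number with consecutive nine-bit blocks `f 0, …, f (n - 1)`. The ninth bit leaves room for
the carry in `laneNonzero`. -/
def pack (f : ℕ → ℕ) (n : ℕ) : ℕ :=
  Nat.rec 0 (fun i t => Nat.add t (Nat.shiftLeft (f i) (Nat.mul 9 i))) n

/-- Replaces each block of `v` by `0` if it is zero, and by `256` if it lies between `1` and
`256`. -/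
def laneNonzero (v : ℕ) : ℕ :=
  Nat.land (pack (fun _ => 256) 256) (Nat.add v (pack (fun _ => 255) 256))

/-- The table of the codes of all cubes. -/
def cubeTable : ℕ :=
  pack (fun n => mul n (mul n n)) 256

/-- The code of the cube of the element with code `n`. -/
def cubeCode (n : ℕ) : ℕ :=
  lane cubeTable n

/-- `cubePolar` on codes. -/
def polarCode (s x : ℕ) : ℕ :=
  Nat.xor (Nat.xor (cubeCode (Nat.xor s x)) (cubeCode s)) (cubeCode x)

/-- The code of an element together with the table of its values under `polarCode`. -/
structure CodePoint where
  val : ℕ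
  table : ℕ

/-- The element with code `p`, with its table. -/
def CodePoint.of (p : ℕ) : CodePoint :=
  ⟨p, pack (polarCode p) 256⟩

/-- The sum of two elements; `polarCode` is additive, so the tables are added bitwise. -/
def CodePoint.add (p q : CodePoint) : CodePoint :=
  ⟨Nat.xor p.val q.val, Nat.xor p.table q.table⟩

/-- The plane spanned by two elements, of which the three nonzero elements matter. -/
structure CodeLine where
  p : CodePoint
  q : CodePoint

/-- The conjunction of `f` over the nonzero elements of a plane. -/
def CodeLine.land (l : CodeLine) (f : CodePoint → ℕ) : ℕ :=
  Nat.land (Nat.land (f l.p) (f l.q)) (f (l.p.add l.q))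

/-- The numbers below `256` that satisfy `p`. -/
def filterBelow (p : ℕ → Bool) : List ℕ :=
  Nat.rec [] (fun n l => cond (p n) (n :: l) l) 256

/-- The planes with basis `p < q < p + q` on which `polarCode` is the constant `d`. -/
def codeLines (d : ℕ) : List CodeLine :=
  (List.range 256).flatMap fun p =>
    (filterBelow fun q =>
      cond (Nat.blt p q) (cond (Nat.blt q (Nat.xor p q)) (Nat.beq (polarCode p q) d) false)
        false).map fun q => ⟨.of p, .of q⟩

/-- The table whose entry at `x` is zero if, for some points `a` of `t` and `b` of `u`, the sum
`x + s + a + b` is not excluded from the configuration by `AgreesWithCube.sum_cubePolar_eq`. -/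
def misses (d : ℕ) (s : CodePoint) (t u : CodeLine) : ℕ :=
  t.land fun a => u.land fun b =>
    laneNonzero (Nat.xor (Nat.xor (Nat.xor s.table a.table) b.table)
      (Nat.mul (pack (fun _ => 1) 256)
        (Nat.xor (Nat.xor d (lane s.table a.val)) (lane b.table (Nat.xor s.val a.val)))))

/-- The code of the point `(x, x ^ 3 + D)` of the graph of an affine map that agrees with the cube
at `x`, where `n` and `d` are the codes of `x` and `D`. -/
def lift (d n : ℕ) : ℕ :=
  Nat.xor n (Nat.shiftLeft (Nat.xor (cubeCode n) d) 8)

/-- Recognizes the values of `lift d`. -/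
def isLift (d n : ℕ) : Bool :=
  Nat.beq (Nat.shiftRight n 8) (Nat.xor (cubeCode (Nat.land n 255)) d)

/-- The bitwise sums of all sublists of `l`. -/
def xorSpan (l : List ℕ) : List ℕ :=
  List.rec [0] (fun a _ s => List.rec [] (fun b _ r => b :: Nat.xor a b :: r) s) l

/-- The number of entries of `l` that satisfy `p`. -/
def count (p : ℕ → Bool) (l : List ℕ) : ℕ :=
  List.rec 0 (fun a _ n => cond (p a) (Nat.succ n) n) l

/-- At most one element of `x + y + span s` lies on the lifted cube graph. -/
def isPairExcluded (d x y : ℕ) (s : List ℕ) : Bool :=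
  Nat.blt (count (fun b => isLift d (Nat.xor (Nat.xor (lift d x) (lift d y)) b)) s) 2

/-- The list of the positions below `256` at which the table `m` has entry zero. -/
def hits (m : ℕ) : List ℕ :=
  filterBelow fun x => Nat.beq (lane m x) 0

/-- The lifts of the basis vectors of three planes. -/
def generators (d : ℕ) (t u v : CodeLine) : List ℕ :=
  [t.p.val, t.q.val, u.p.val, u.q.val, v.p.val, v.q.val].map (lift d)

/-- The table whose entry at `x` is zero if `x` might be adjacent to both basis vectors of `t`. -/
def tripleMisses (d : ℕ) (t u v : CodeLine) : ℕ :=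
  Nat.lor (misses d t.p u v) (misses d t.q u v)

/-- Excludes every pair `x, y` that might be adjacent to both basis vectors of `t`. -/
def isTripleExcluded (d : ℕ) (t u v : CodeLine) : Bool :=
  let m := tripleMisses d t u v
  Nat.beq m (pack (fun _ => 256) 256) || (hits m).all fun x => (hits m).all fun y =>
    Nat.ble y x || isPairExcluded d x y (xorSpan (generators d t u v))

/-- Excludes all triples of planes from `codeLines d` with increasing first basis vectors. -/
def isConstExcluded (d : ℕ) : Bool :=
  (codeLines d).all fun t => (codeLines d).all fun u => Nat.ble u.p.val t.p.val ||
    (codeLines d).all fun v => Nat.ble v.p.val u.p.val || isTripleExcluded d t u v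

theorem isConstExcluded_one : isConstExcluded 1 = true := by
  decide +kernel

theorem isConstExcluded_two : isConstExcluded 2 = true := by
  decide +kernel

end Search

section Pack

theorem lane_eq (t n : ℕ) : lane t n = t / 2 ^ (9 * n) % 2 ^ 9 :=
  (Nat.and_two_pow_sub_one_eq_mod _ 9).trans (by rw [← Nat.shiftRight_eq_div_pow]; rfl)

theorem lane_and (a b n : ℕ) : lane (a &&& b) n = lane a n &&& lane b n := by
  rw [lane_eq, lane_eq, lane_eq, Nat.and_div_two_pow, Nat.and_mod_two_pow]

theorem lane_or (a b n : ℕ) : lane (a ||| b) n = lane a n ||| lane b n := by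
  rw [lane_eq, lane_eq, lane_eq, Nat.or_div_two_pow, Nat.or_mod_two_pow]

theorem pack_succ (f : ℕ → ℕ) (n : ℕ) : pack f (n + 1) = 2 ^ (9 * n) * f n + pack f n :=
  (Nat.add_comm _ _).trans (congrArg (· + pack f n) ((Nat.shiftLeft_eq _ _).trans (mul_comm _ _)))

theorem pack_add (f g : ℕ → ℕ) (n : ℕ) : pack f n + pack g n = pack (fun i => f i + g i) n := by
  induction n with
  | zero => rfl
  | succ n ih => rw [pack_succ, pack_succ, pack_succ, ← ih]; ring

theorem pack_mul_const (f : ℕ → ℕ) (k n : ℕ) : pack f n * k = pack (fun i => f i * k) n := by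
  induction n with
  | zero => exact Nat.zero_mul k
  | succ n ih => rw [pack_succ, pack_succ, ← ih]; ring

theorem pack_congr {f g : ℕ → ℕ} {n : ℕ} (h : ∀ i < n, f i = g i) : pack f n = pack g n := by
  induction n with
  | zero => rfl
  | succ n ih => rw [pack_succ, pack_succ, h n n.lt_succ_self, ih fun i hi => h i (by omega)]

theorem pack_lt {f : ℕ → ℕ} {n : ℕ} (hf : ∀ i < n, f i < 2 ^ 9) : pack f n < 2 ^ (9 * n) := by
  induction n with
  | zero => exact Nat.one_pos
  | succ n ih =>
    rw [pack_succ, Nat.mul_succ, pow_add]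
    nlinarith [hf n n.lt_succ_self, ih fun i hi => hf i (by omega)]

theorem lane_pack {f : ℕ → ℕ} {n i : ℕ} (hf : ∀ j < n, f j < 2 ^ 9) (hi : i < n) :
    lane (pack f n) i = f i := by
  rw [lane_eq]
  induction n with
  | zero => omega
  | succ n ih =>
    have hn : pack f n < 2 ^ (9 * n) := pack_lt fun j hj => hf j (by omega)
    rw [pack_succ]
    obtain rfl | hlt := Nat.eq_or_lt_of_le (Nat.le_of_lt_succ hi)
    · rw [Nat.mul_add_div (by positivity), Nat.div_eq_of_lt hn, add_zero,
        Nat.mod_eq_of_lt (hf i hi)]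
    · obtain ⟨k, rfl⟩ := Nat.exists_eq_add_of_lt hlt
      rw [show 2 ^ (9 * (i + k + 1)) = 2 ^ (9 * i) * (2 ^ 9 * 2 ^ (9 * k)) by ring, mul_assoc,
        Nat.mul_add_div (by positivity), mul_assoc, Nat.mul_add_mod]
      exact ih (fun j hj => hf j (by omega)) hlt

theorem pack_xor {f g : ℕ → ℕ} {n : ℕ} (hf : ∀ i < n, f i < 2 ^ 9) (hg : ∀ i < n, g i < 2 ^ 9) :
    pack f n ^^^ pack g n = pack (fun i => f i ^^^ g i) n := by
  induction n with
  | zero => exact Nat.xor_self 0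
  | succ n ih =>
    have hfn : pack f n < 2 ^ (9 * n) := pack_lt fun i hi => hf i (by omega)
    have hgn : pack g n < 2 ^ (9 * n) := pack_lt fun i hi => hg i (by omega)
    have hrec := ih (fun i hi => hf i (by omega)) fun i hi => hg i (by omega)
    refine Nat.eq_of_testBit_eq fun j => ?_
    rw [pack_succ, pack_succ, pack_succ, ← hrec, Nat.testBit_xor,
      Nat.testBit_two_pow_mul_add _ hfn, Nat.testBit_two_pow_mul_add _ hgn,
      Nat.testBit_two_pow_mul_add _ (Nat.xor_lt_two_pow hfn hgn)]
    split <;> rw [Nat.testBit_xor]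

theorem lane_laneNonzero_eq_zero {f : ℕ → ℕ} (hf : ∀ i < 256, f i < 256) {n : ℕ} (hn : n < 256)
    (h0 : f n = 0) : lane (laneNonzero (pack f 256)) n = 0 := by
  have hsum (i : ℕ) (hi : i < 256) : f i + 255 < 2 ^ 9 :=
    (Nat.add_lt_add_right (hf i hi) 255).trans_le (by norm_num)
  change lane (pack (fun _ => 256) 256 &&& (pack f 256 + pack (fun _ => 255) 256)) n = 0
  rw [pack_add, lane_and, lane_pack (by norm_num) hn, lane_pack hsum hn, h0]
  rfl

end Pack

section Search

theorem mem_filterBelow {p : ℕ → Bool} {n : ℕ} (hn : n < 256) (hp : p n = true) :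
    n ∈ filterBelow p := by
  suffices ∀ m, n < m → n ∈ (Nat.rec [] (fun n l => cond (p n) (n :: l) l) m : List ℕ) from
    this 256 hn
  intro m hm
  induction m with
  | zero => omega
  | succ m ih =>
    obtain rfl | hlt := Nat.eq_or_lt_of_le (Nat.le_of_lt_succ hm)
    · simp only [hp, cond_true, List.mem_cons_self]
    · cases h : p m
      · simpa only [h, cond_false] using ih hlt
      · simpa only [h, cond_true] using List.mem_cons_of_mem m (ih hlt)

theorem mem_hits {m n : ℕ} (hn : n < 256) (h : lane m n = 0) : n ∈ hits m :=
  mem_filterBelow hn (Nat.beq_eq.mpr h)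

theorem count_eq_length_filter (p : ℕ → Bool) (l : List ℕ) : count p l = (l.filter p).length := by
  induction l with
  | nil => rfl
  | cons c l ih =>
    change cond (p c) (count p l).succ (count p l) = _
    cases h : p c
    · rw [List.filter_cons_of_neg (by simp [h]), cond_false, ih]
    · rw [List.filter_cons_of_pos h, cond_true, ih, List.length_cons]

theorem two_le_count {p : ℕ → Bool} {l : List ℕ} {a b : ℕ} (hab : a ≠ b) (ha : a ∈ l) (hb : b ∈ l)
    (hpa : p a = true) (hpb : p b = true) : 2 ≤ count p l := by
  have hcard : 1 < (l.filter p).toFinset.card :=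
    Finset.one_lt_card.mpr ⟨a, by simp [ha, hpa], b, by simp [hb, hpb], hab⟩
  rw [count_eq_length_filter]
  exact hcard.trans_le (List.toFinset_card_le _)

theorem mem_xorSpan_cons {a b : ℕ} {l : List ℕ} (hb : b ∈ xorSpan l) :
    b ∈ xorSpan (a :: l) ∧ a ^^^ b ∈ xorSpan (a :: l) := by
  change b ∈ (List.rec [] (fun b _ r => b :: Nat.xor a b :: r) (xorSpan l) : List ℕ) ∧
    Nat.xor a b ∈ (List.rec [] (fun b _ r => b :: Nat.xor a b :: r) (xorSpan l) : List ℕ)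
  generalize xorSpan l = s at hb ⊢
  induction s with
  | nil => cases hb
  | cons c s ih =>
    obtain rfl | hmem := List.mem_cons.mp hb
    · exact ⟨List.mem_cons_self, List.mem_cons_of_mem _ List.mem_cons_self⟩
    · exact ⟨List.mem_cons_of_mem _ (List.mem_cons_of_mem _ (ih hmem).1),
        List.mem_cons_of_mem _ (List.mem_cons_of_mem _ (ih hmem).2)⟩

theorem isTripleExcluded_of_isConstExcluded {d : ℕ} (h : isConstExcluded d = true)
    {t u v : CodeLine} (ht : t ∈ codeLines d) (hu : u ∈ codeLines d) (hv : v ∈ codeLines d)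
    (htu : t.p.val < u.p.val) (huv : u.p.val < v.p.val) : isTripleExcluded d t u v = true := by
  simp only [isConstExcluded, List.all_eq_true, Bool.or_eq_true, Nat.ble_eq] at h
  exact ((h t ht u hu).resolve_left htu.not_ge v hv).resolve_left huv.not_ge

theorem xor_shiftLeft_shiftRight {n : ℕ} (hn : n < 256) (m : ℕ) : (n ^^^ m <<< 8) >>> 8 = m := by
  rw [Nat.shiftRight_xor_distrib, Nat.shiftLeft_shiftRight, Nat.shiftRight_eq_div_pow,
    Nat.div_eq_of_lt hn, Nat.zero_xor]

theorem xor_shiftLeft_and {n : ℕ} (hn : n < 256) (m : ℕ) : (n ^^^ m <<< 8) &&& 255 = n := by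
  rw [Nat.and_xor_distrib_right]
  have hlow : (m <<< 8) &&& 255 = 0 := by
    rw [Nat.shiftLeft_eq]
    exact (Nat.and_two_pow_sub_one_eq_mod _ 8).trans (Nat.mul_mod_left m _)
  have hn255 : n &&& 255 = n := (Nat.and_two_pow_sub_one_eq_mod n 8).trans (Nat.mod_eq_of_lt hn)
  rw [hlow, hn255, Nat.xor_zero]

theorem isLift_lift (d : ℕ) {n : ℕ} (hn : n < 256) : isLift d (lift d n) = true := by
  have hshift : Nat.shiftRight (lift d n) 8 = Nat.xor (cubeCode n) d :=
    xor_shiftLeft_shiftRight hn _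
  have hland : Nat.land (lift d n) 255 = n := xor_shiftLeft_and hn _
  rw [isLift, hshift, hland]
  exact Nat.beq_refl _

end Search

-- Unification must not evaluate the packed tables.
attribute [irreducible] pack

section Soundness

variable {F : Type*} [Field F] {e : F → ℕ}

/-- The plane with basis `p, q`, as an input of the search. -/
def codeLine (e : F → ℕ) (p q : F) : CodeLine :=
  ⟨.of (e p), .of (e q)⟩

/-- The code of the point `(x, L x)` of the graph of `L`. -/
def graphCode (e : F → ℕ) (L : F →+ F) (x : F) : ℕ :=
  e x ^^^ e (L x) <<< 8

namespace IsCubeCoding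

theorem cubeCode_eq (he : IsCubeCoding e) (x : F) : cubeCode (e x) = e (x ^ 3) := by
  rw [he.map_cube]
  exact lane_pack (fun n hn => (mul_mul_self_lt n hn).trans (by norm_num)) (he.lt x)

theorem map_zero (he : IsCubeCoding e) : e 0 = 0 := by
  rw [← add_zero (0 : F), he.map_add, Nat.xor_self]

variable {L : F →+ F}

theorem graphCode_add (he : IsCubeCoding e) (x y : F) :
    graphCode e L (x + y) = graphCode e L x ^^^ graphCode e L y := by
  simp only [graphCode, _root_.map_add, he.map_add, Nat.shiftLeft_xor_distrib]
  ac_rfl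

theorem graphCode_injective (he : IsCubeCoding e) : Function.Injective (graphCode e L) := by
  intro x y hxy
  rw [graphCode, graphCode] at hxy
  apply he.injective
  rw [← xor_shiftLeft_and (he.lt x) (e (L x)), hxy, xor_shiftLeft_and (he.lt y)]

theorem graphCode_smul_add_mem [Module (ZMod 2) F] (he : IsCubeCoding e) (c : ZMod 2) (t : F)
    {y : F} {l : List ℕ} (hy : graphCode e L y ∈ xorSpan l) :
    graphCode e L (c • t + y) ∈ xorSpan (graphCode e L t :: l) := by
  obtain rfl | rfl : c = 0 ∨ c = 1 := by revert c; decide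
  · rw [zero_smul, zero_add]
    exact (mem_xorSpan_cons hy).1
  · rw [one_smul, he.graphCode_add]
    exact (mem_xorSpan_cons hy).2

theorem graphCode_lineSum_mem [Module (ZMod 2) F] (he : IsCubeCoding e) (p q : Fin 3 → F)
    (v : Fin 3 → Plane) :
    graphCode e L (lineSum (fun i => line (p i) (q i)) v) ∈ xorSpan
      ([p 0, q 0, p 1, q 1, p 2, q 2].map (graphCode e L)) := by
  have hzero : graphCode e L 0 ∈ xorSpan [] := by
    rw [graphCode, _root_.map_zero, he.map_zero]
    exact List.mem_singleton.mpr rfl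
  have hsum : lineSum (fun i => line (p i) (q i)) v = (v 0).1 • p 0 + ((v 0).2 • q 0 +
      ((v 1).1 • p 1 + ((v 1).2 • q 1 + ((v 2).1 • p 2 + ((v 2).2 • q 2 + 0))))) := by
    simp only [lineSum_apply, line, LinearMap.coprod_apply, LinearMap.toSpanSingleton_apply,
      add_assoc, add_zero]
  rw [hsum]
  iterate 6 refine he.graphCode_smul_add_mem _ _ ?_
  exact hzero

variable [CharP F 2]

theorem polarCode_eq (he : IsCubeCoding e) (s x : F) :
    polarCode (e s) (e x) = e (cubePolar s x) := by
  rw [cubePolar_eq, he.map_add, he.map_add, ← he.cubeCode_eq, ← he.cubeCode_eq, ← he.cubeCode_eq,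
    he.map_add]
  rfl

theorem polarCode_lt (he : IsCubeCoding e) (s : F) : ∀ n < 256, polarCode (e s) n < 2 ^ 9 := by
  intro n hn
  obtain ⟨x, rfl⟩ := he.exists_eq n hn
  rw [he.polarCode_eq]
  exact (he.lt _).trans (by norm_num)

theorem lane_table (he : IsCubeCoding e) (s x : F) :
    lane (CodePoint.of (e s)).table (e x) = e (cubePolar s x) :=
  (lane_pack (he.polarCode_lt s) (he.lt x)).trans (he.polarCode_eq s x)

theorem codePoint_add (he : IsCubeCoding e) (a b : F) :
    (CodePoint.of (e a)).add (.of (e b)) = .of (e (a + b)) := by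
  refine congrArg₂ CodePoint.mk (he.map_add a b).symm ?_
  refine (pack_xor (he.polarCode_lt a) (he.polarCode_lt b)).trans (pack_congr fun n hn => ?_)
  obtain ⟨x, rfl⟩ := he.exists_eq n hn
  rw [he.polarCode_eq, he.polarCode_eq, he.polarCode_eq, cubePolar_add_left, he.map_add]

theorem codeLine_mem (he : IsCubeCoding e) {p q D : F} (hpq : e p < e q)
    (hq : e q < e (p + q)) (hD : cubePolar p q = D) : codeLine e p q ∈ codeLines (e D) := by
  refine List.mem_flatMap.mpr ⟨e p, List.mem_range.mpr (he.lt p), List.mem_map.mpr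
    ⟨e q, mem_filterBelow (he.lt q) ?_, rfl⟩⟩
  rw [he.map_add] at hq
  rw [show Nat.blt (e p) (e q) = true from Nat.ble_eq_true_of_le hpq,
    show Nat.blt (e q) (Nat.xor (e p) (e q)) = true from Nat.ble_eq_true_of_le hq, he.polarCode_eq,
    hD, cond_true, cond_true]
  exact Nat.beq_refl _

theorem graphCode_eq_lift (he : IsCubeCoding e) {t D : F} (ht : t ^ 3 = L t + D) :
    graphCode e L t = lift (e D) (e t) := by
  have hcode : Nat.xor (cubeCode (e t)) (e D) = e (L t) := by
    rw [he.cubeCode_eq, ht]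
    refine (he.map_add _ _).symm.trans (congrArg e ?_)
    rw [add_assoc, CharTwo.add_self_eq_zero, add_zero]
  rw [lift, hcode]
  rfl

theorem not_isPairExcluded [Module (ZMod 2) F] (he : IsCubeCoding e) {T : Finset F}
    {D x y : F} {p q : Fin 3 → F} (hL : ∀ t ∈ T, t ^ 3 = L t + D) (hp : ∀ i, p i ∈ T)
    (hq : ∀ i, q i ∈ T) (hx : x ∈ T) (hy : y ∈ T) {z w : F} (hz : z ∈ T) (hw : w ∈ T) (hzw : z ≠ w)
    (hzspan : x + y + z ∈ (lineSum fun i => line (p i) (q i)).range)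
    (hwspan : x + y + w ∈ (lineSum fun i => line (p i) (q i)).range) :
    ¬ isPairExcluded (e D) (e x) (e y) (xorSpan (generators (e D) (codeLine e (p 0) (q 0))
      (codeLine e (p 1) (q 1)) (codeLine e (p 2) (q 2)))) = true := by
  have hlift {t : F} (ht : t ∈ T) : graphCode e L t = lift (e D) (e t) :=
    he.graphCode_eq_lift (hL t ht)
  have hgenerators : generators (e D) (codeLine e (p 0) (q 0)) (codeLine e (p 1) (q 1))
      (codeLine e (p 2) (q 2)) = [p 0, q 0, p 1, q 1, p 2, q 2].map (graphCode e L) := by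
    simp only [List.map_cons, List.map_nil, hlift (hp _), hlift (hq _)]
    rfl
  have hisLift {t : F} (ht : t ∈ T) : isLift (e D) (Nat.xor (Nat.xor (lift (e D) (e x))
      (lift (e D) (e y))) (graphCode e L (x + y + t))) = true := by
    have hcancel : x + y + (x + y + t) = t := by
      rw [← add_assoc, CharTwo.add_self_eq_zero, zero_add]
    rw [← hlift hx, ← hlift hy]
    change isLift _ (graphCode e L x ^^^ graphCode e L y ^^^ _) = true
    rw [← he.graphCode_add, ← he.graphCode_add, hcancel, hlift ht]
    exact isLift_lift _ (he.lt t)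
  have hmem {u : F} (hu : u ∈ (lineSum fun i => line (p i) (q i)).range) :
      graphCode e L u ∈ xorSpan ([p 0, q 0, p 1, q 1, p 2, q 2].map (graphCode e L)) := by
    obtain ⟨v, rfl⟩ := hu
    exact he.graphCode_lineSum_mem p q v
  have hne : graphCode e L (x + y + z) ≠ graphCode e L (x + y + w) :=
    fun h => hzw (add_left_cancel (he.graphCode_injective h))
  rw [hgenerators]
  intro h
  exact (Nat.le_of_ble_eq_true h).not_gt (Nat.lt_succ_of_le
    (two_le_count hne (hmem hzspan) (hmem hwspan) (hisLift hz) (hisLift hw)))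

theorem lane_land_eq_zero [DecidableEq F] (he : IsCubeCoding e) {p q a : F}
    (ha : a ∈ ({p, q, p + q} : Finset F)) {f : CodePoint → ℕ} {n : ℕ}
    (h : lane (f (.of (e a))) n = 0) :
    lane ((codeLine e p q).land f) n = 0 := by
  change lane (f (.of (e p)) &&& f (.of (e q)) &&& f ((CodePoint.of (e p)).add (.of (e q)))) n = 0
  rw [he.codePoint_add, lane_and, lane_and]
  simp only [Finset.mem_insert, Finset.mem_singleton] at ha
  rcases ha with rfl | rfl | rfl <;> simp only [h, Nat.zero_and, Nat.and_zero]

theorem lane_misses_eq_zero [DecidableEq F] (he : IsCubeCoding e) {D s x p q a p' q' b : F}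
    (ha : a ∈ ({p, q, p + q} : Finset F)) (hb : b ∈ ({p', q', p' + q'} : Finset F))
    (hsum : cubePolar s x + cubePolar a x + cubePolar b x +
      (D + cubePolar s a + cubePolar (s + a) b) = 0) :
    lane (misses (e D) (.of (e s)) (codeLine e p q) (codeLine e p' q')) (e x) = 0 := by
  refine he.lane_land_eq_zero ha (he.lane_land_eq_zero hb ?_)
  let k := D + cubePolar s a + cubePolar (s + a) b
  have hk : Nat.xor (Nat.xor (e D) (lane (CodePoint.of (e s)).table (e a)))
      (lane (CodePoint.of (e b)).table (Nat.xor (e s) (e a))) = e k := by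
    rw [show Nat.xor (e s) (e a) = e (s + a) from (he.map_add s a).symm, he.lane_table,
      he.lane_table, show cubePolar b (s + a) = cubePolar (s + a) b by simp only [cubePolar]; ring,
      he.map_add, he.map_add]
    rfl
  have htable : Nat.xor (Nat.xor (CodePoint.of (e s)).table (CodePoint.of (e a)).table)
      (CodePoint.of (e b)).table = pack (polarCode (e (s + a + b))) 256 := by
    refine (congrArg CodePoint.table (?_ : ((CodePoint.of (e s)).add (.of (e a))).add (.of (e b)) =
      .of (e (s + a + b))))
    rw [he.codePoint_add, he.codePoint_add]
  have hlt (y : F) : e y < 2 ^ 9 := (he.lt y).trans (by norm_num)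
  have hxor : Nat.xor (pack (polarCode (e (s + a + b))) 256)
      (Nat.mul (pack (fun _ => 1) 256) (e k)) =
        pack (fun n => polarCode (e (s + a + b)) n ^^^ e k) 256 := by
    rw [show Nat.mul _ _ = _ from pack_mul_const (fun _ => 1) (e k) 256]
    simp only [one_mul]
    exact pack_xor (he.polarCode_lt _) fun _ _ => hlt k
  have hval (y : F) : (CodePoint.of (e y)).val = e y := rfl
  rw [hval, hval, hk, htable, hxor]
  refine lane_laneNonzero_eq_zero (fun n hn => ?_) (he.lt x) ?_
  · obtain ⟨y, rfl⟩ := he.exists_eq n hn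
    rw [he.polarCode_eq, ← he.map_add]
    exact he.lt _
  · rw [he.polarCode_eq, ← he.map_add, cubePolar_add_left, cubePolar_add_left]
    exact (congrArg e hsum).trans he.map_zero

variable [Module (ZMod 2) F]

theorem lane_misses_eq_zero_of_isAdjacent (he : IsCubeCoding e) {T : Set F} {D x : F}
    {p q : Fin 3 → F} (hT : AgreesWithCube T D) (hline : IsLineTriple T fun i => line (p i) (q i))
    (hx : x ∈ T) {b : Plane} (hadj : IsAdjacent T (fun i => line (p i) (q i)) b x) :
    lane (misses (e D) (.of (e (line (p 0) (q 0) b))) (codeLine e (p 1) (q 1))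
      (codeLine e (p 2) (q 2))) (e x) = 0 := by
  classical
  obtain ⟨y, hy, v, rfl, hv, hxy⟩ := hadj
  have hmem (i : Fin 3) : line (p i) (q i) (v i) ∈ T := hline.mem i (v i) (hv i)
  refine he.lane_misses_eq_zero (line_mem _ _ (hv 1)) (line_mem _ _ (hv 2))
    (hT.sum_cubePolar_eq hx (hmem 0) (hmem 1) (hmem 2) ?_)
  rw [lineSum_apply] at hxy
  rwa [add_assoc, add_assoc, ← add_assoc (line _ _ _), ← hxy, ← add_assoc,
    CharTwo.add_self_eq_zero, zero_add]

theorem lane_tripleMisses_eq_zero (he : IsCubeCoding e) {T : Set F} {D x : F} {p q : Fin 3 → F}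
    (hT : AgreesWithCube T D) (hline : IsLineTriple T fun i => line (p i) (q i)) (hx : x ∈ T)
    (hadj : ∀ b ∈ planeBasis, IsAdjacent T (fun i => line (p i) (q i)) b x) :
    lane (tripleMisses (e D) (codeLine e (p 0) (q 0)) (codeLine e (p 1) (q 1))
      (codeLine e (p 2) (q 2))) (e x) = 0 := by
  have hp := he.lane_misses_eq_zero_of_isAdjacent hT hline hx (hadj (1, 0) (by simp [planeBasis]))
  have hq := he.lane_misses_eq_zero_of_isAdjacent hT hline hx (hadj (0, 1) (by simp [planeBasis]))
  rw [show line (p 0) (q 0) (1, 0) = p 0 by simp [line]] at hp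
  rw [show line (p 0) (q 0) (0, 1) = q 0 by simp [line]] at hq
  rw [show lane (tripleMisses _ _ _ _) (e x) = _ from lane_or _ _ _,
    show lane (misses _ (codeLine e (p 0) (q 0)).p _ _) (e x) = 0 from hp,
    show lane (misses _ (codeLine e (p 0) (q 0)).q _ _) (e x) = 0 from hq]
  rfl

theorem not_isTripleExcluded (he : IsCubeCoding e) (hF : Nat.card F = 256) {T : Finset F} {D : F}
    {p q : Fin 3 → F} (hT : AgreesWithCube (T : Set F) D) (hcard : 17 ≤ T.card)
    (hline : IsLineTriple (T : Set F) fun i => line (p i) (q i)) :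
    ¬ isTripleExcluded (e D) (codeLine e (p 0) (q 0)) (codeLine e (p 1) (q 1))
      (codeLine e (p 2) (q 2)) = true := by
  classical
  obtain ⟨x, hx, y, hy, hxy, hadj, hspan⟩ := hline.exists_isAdjacent_pair hF hcard
  wlog hlt : e x < e y generalizing x y
  · refine this y hy x hx hxy.symm (fun b hb => (hadj b hb).symm) ?_
      ((not_lt.mp hlt).lt_of_ne (he.injective.ne hxy.symm))
    rwa [add_comm y x]
  obtain ⟨z, hz, w, hw, hzw⟩ := Finset.one_lt_card.mp hspan
  rw [Finset.mem_filter] at hz hw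
  obtain ⟨L, hL⟩ := id hT
  have hp (i : Fin 3) : p i ∈ T := by simpa [line] using hline.mem i (1, 0) (by decide)
  have hq (i : Fin 3) : q i ∈ T := by simpa [line] using hline.mem i (0, 1) (by decide)
  have hxmisses := he.lane_tripleMisses_eq_zero hT hline hx fun b hb => (hadj b hb).1
  have hymisses := he.lane_tripleMisses_eq_zero hT hline hy fun b hb => (hadj b hb).2
  intro h
  rw [isTripleExcluded, Bool.or_eq_true, List.all_eq_true] at h
  rcases h with hfull | hall
  · rw [Nat.eq_of_beq_eq_true hfull, lane_pack (by norm_num) (he.lt x)] at hxmisses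
    exact absurd hxmisses (by norm_num)
  · have hpair := List.all_eq_true.mp (hall _ (mem_hits (he.lt x) hxmisses)) _
      (mem_hits (he.lt y) hymisses)
    rw [Bool.or_eq_true, Nat.ble_eq] at hpair
    exact he.not_isPairExcluded hL hp hq hx hy hz.1 hw.1 hzw hz.2 hw.2
      (hpair.resolve_left hlt.not_ge)

theorem not_isConfig [DecidableEq F] (he : IsCubeCoding e) (hF : Nat.card F = 256) {D : F}
    (hD : isConstExcluded (e D) = true) (T : Finset F) : ¬ IsConfig T D := by
  intro hT
  obtain ⟨p, q, hpq, hmono, hline⟩ := hT.exists_lines he.injective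
  have hcodeLine (i : Fin 3) : codeLine e (p i) (q i) ∈ codeLines (e D) := by
    refine he.codeLine_mem (hpq i).1 (hpq i).2 (hT.agrees.cubePolar_eq ?_ ?_ ?_)
    · simpa [line] using hline.mem i (1, 0) (by decide)
    · simpa [line] using hline.mem i (0, 1) (by decide)
    · simpa [line] using hline.mem i (1, 1) (by decide)
  exact he.not_isTripleExcluded hF hT.agrees hT.card hline
    (isTripleExcluded_of_isConstExcluded hD (hcodeLine 0) (hcodeLine 1) (hcodeLine 2)
      (hmono (by decide : (0 : Fin 3) < 1)) (hmono (by decide : (1 : Fin 3) < 2)))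

end IsCubeCoding

theorem not_agreesWithCube [CharP F 2] (hF : Nat.card F = 256) {S : Finset F} {D : F}
    (hcard : 17 ≤ S.card) : ¬ AgreesWithCube (S : Set F) D := by
  classical
  let := ZMod.algebra F 2
  intro hS
  obtain ⟨g, hg⟩ := exists_isOcticRoot (F := F) hF
  obtain ⟨e, he, hg2⟩ := hg.exists_isCubeCoding hF
  obtain ⟨T, D', hT⟩ := exists_isConfig hF hS hcard
  obtain ⟨T', hone | hroot⟩ := hT.exists_normalized hF hg.ne_zero hg.pow_85_ne_one
  · exact he.not_isConfig hF (he.map_one ▸ isConstExcluded_one) T' hone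
  · exact he.not_isConfig hF (hg2 ▸ isConstExcluded_two) T' hroot

end Soundness

end GoldCube

theorem gold_cube_dim8_far_from_affine
    (f : GaloisField 2 8 → GaloisField 2 8) (hf : ∀ x, f x = x ^ 3) :
    (∀ (L : GaloisField 2 8 →ₗ[ZMod 2] GaloisField 2 8) (c : GaloisField 2 8),
        240 ≤ {x : GaloisField 2 8 | f x ≠ L x + c}.ncard) ∧
      240 ≤ dA f := by
  have hcard : Nat.card (GaloisField 2 8) = 256 := by
    rw [GaloisField.card 2 8 (by norm_num)]
    norm_num
  have hdist (L : GaloisField 2 8 →ₗ[ZMod 2] GaloisField 2 8) (c : GaloisField 2 8) :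
      240 ≤ {x | f x ≠ L x + c}.ncard := by
    by_contra! hlt
    have hcompl := Set.ncard_add_ncard_compl {x | f x = L x + c}
    rw [hcard, show {x | f x = L x + c}ᶜ = {x | f x ≠ L x + c} from rfl] at hcompl
    obtain ⟨S, hS⟩ := (Set.toFinite {x | f x = L x + c}).exists_finset_coe
    rw [← hS, Set.ncard_coe_finset] at hcompl
    refine GoldCube.not_agreesWithCube hcard (D := c) (by lia : 17 ≤ S.card)
      ⟨L.toAddMonoidHom, fun x hx => ?_⟩
    rw [hS] at hx
    exact (hf x).symm.trans hx
  refine ⟨hdist, le_csInf ⟨_, 0, 0, rfl⟩ ?_⟩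
  rintro _ ⟨L, c, rfl⟩
  exact hdist L c
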